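/- Let G be the parallel composition of r paths of lengths k_1,...,k_r, where k_1,...,k_l are odd with l ≥ 2, k_{l+1},...,k_r are even, and r − l ≥ 2, and let X be the projective toric subset parameterized by G. Then reg(G) = (⌊k_1/2⌋ + ... + ⌊k_l/2⌋ + k_{l+1}/2 + ... + k_r/2)(q−2). -/

import Mathlib

open MvPolynomial

/-- A finite multigraph without loops: each edge `e` has two distinct endpoints
`fst e` and `snd e`.  Multiple edges with the same endpoints are allowed. -/
structure Multigraph (V E : Type) : Type where
  fst : E → V
  snd : E → V
  ne : ∀ e, fst e ≠ snd e

namespace Multigraph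

variable {V E : Type}

/-- Vertex `v` is an endpoint of the edge `e`. -/
def Incident (G : Multigraph V E) (v : V) (e : E) : Prop :=
  G.fst e = v ∨ G.snd e = v

instance (G : Multigraph V E) [DecidableEq V] (v : V) : DecidablePred (G.Incident v) :=
  fun e => inferInstanceAs (Decidable (G.fst e = v ∨ G.snd e = v))

/-- The degree of a vertex: the number of edges incident to it. -/
noncomputable def degree (G : Multigraph V E) (v : V) : ℕ :=
  Nat.card {e : E // G.Incident v e}

/-- The graph has no isolated vertices. -/
def NoIsolated (G : Multigraph V E) : Prop :=
  ∀ v : V, ∃ e : E, G.Incident v e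

variable (K : Type) [Field K] [Fintype K]

/-- The point of the affine torus associated with an assignment `x` of nonzero
scalars to the vertices: its coordinate at an edge `e = {v,w}` is `x v * x w`. -/
def point (G : Multigraph V E) (x : V → Kˣ) : E → K :=
  fun e => (x (G.fst e) : K) * (x (G.snd e) : K)

/-- The projective toric subset `X` parameterized by `G`, realized as the set of
`Kˣ`-orbits (i.e. projective points) of the points `G.point K x`, `x : V → Kˣ`. -/
def toricSet (G : Multigraph V E) : Set (Set (E → K)) :=
  Set.range fun x : V → Kˣ => MulAction.orbit Kˣ (G.point K x)

/-- The vanishing ideal `I(X)` of the projective toric subset parameterized by `G`: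
the ideal of all polynomials each of whose homogeneous components vanishes at the
point `G.point K x` for every `x : V → Kˣ`. -/
def vanishingIdeal (G : Multigraph V E) : Ideal (MvPolynomial E K) where
  carrier := {f | ∀ (x : V → Kˣ) (d : ℕ), eval (G.point K x) (homogeneousComponent d f) = 0}
  zero_mem' := by intro x d; simp
  add_mem' := by
    intro a b ha hb x d
    rw [map_add, map_add, ha x d, hb x d, add_zero]
  smul_mem' := by
    intro c f hf x n
    rw [smul_eq_mul, ← sum_homogeneousComponent f, Finset.mul_sum, map_sum, map_sum]
    refine Finset.sum_eq_zero fun d _ => ?_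
    nth_rewrite 1 [← sum_homogeneousComponent c]
    rw [Finset.sum_mul, map_sum, map_sum]
    refine Finset.sum_eq_zero fun e _ => ?_
    have h1 : (homogeneousComponent e c * homogeneousComponent d f).IsHomogeneous (e + d) :=
      (homogeneousComponent_isHomogeneous e c).mul (homogeneousComponent_isHomogeneous d f)
    rw [homogeneousComponent_of_mem ((mem_homogeneousSubmodule _ _).mpr h1)]
    split_ifs
    · rw [map_mul, hf x d, mul_zero]
    · simp

/-- The Hilbert function of `S/I(X)`: the dimension over `K` of the degree-`d`
homogeneous component of the quotient, realized as the image of the space of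
degree-`d` homogeneous polynomials in the quotient. -/
noncomputable def hilbert (G : Multigraph V E) (d : ℕ) : ℕ :=
  Module.finrank K
    ((homogeneousSubmodule E K d).map (Ideal.Quotient.mkₐ K (G.vanishingIdeal K)).toLinearMap)

/-- The regularity `reg G`: the least `d` such that the Hilbert function of `S/I(X)`
at `d` equals the number of points of `X`. -/
noncomputable def reg (G : Multigraph V E) : ℕ :=
  sInf {d : ℕ | G.hilbert K d = (G.toricSet K).ncard}

/-- The graph obtained from `G` by deleting a vertex `v` and all edges incident
to it. -/
def deleteVert (G : Multigraph V E) (v : V) :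
    Multigraph {w : V // w ≠ v} {e : E // ¬ G.Incident v e} where
  fst e := ⟨G.fst e.1, fun h => e.2 (Or.inl h)⟩
  snd e := ⟨G.snd e.1, fun h => e.2 (Or.inr h)⟩
  ne e h := G.ne e.1 (congrArg Subtype.val h)

/-- The graph obtained from `G` by identifying the vertex `v₂` with the vertex `v₁`:
the edges are the same, and every endpoint equal to `v₂` is replaced by `v₁`.
This requires that `{v₁, v₂}` is a non-edge of `G`, so that no loops are created. -/
def identifyVert [DecidableEq V] (G : Multigraph V E) (v₁ v₂ : V) (h12 : v₁ ≠ v₂)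
    (h : ∀ e, ¬ (G.Incident v₁ e ∧ G.Incident v₂ e)) :
    Multigraph {w : V // w ≠ v₂} E where
  fst e := ⟨if G.fst e = v₂ then v₁ else G.fst e, by split_ifs with hh; exacts [h12, hh]⟩
  snd e := ⟨if G.snd e = v₂ then v₁ else G.snd e, by split_ifs with hh; exacts [h12, hh]⟩
  ne := by
    intro e heq
    rw [Subtype.ext_iff] at heq
    simp only at heq
    split_ifs at heq with h1 h2 h2
    · exact G.ne e (h1.trans h2.symm)
    · exact h e ⟨Or.inr heq.symm, Or.inl h1⟩
    · exact h e ⟨Or.inl heq, Or.inr h2⟩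
    · exact G.ne e heq

/-- The subgraph of `G` determined by a set `A` of edges of `G`, together with all
endpoints of those edges (so it has no isolated vertices). -/
def subgraph [DecidableEq V] (G : Multigraph V E) (A : Finset E) :
    Multigraph {v : V // ∃ e ∈ A, G.Incident v e} {e : E // e ∈ A} where
  fst e := ⟨G.fst e.1, e.1, e.2, Or.inl rfl⟩
  snd e := ⟨G.snd e.1, e.1, e.2, Or.inr rfl⟩
  ne e h := G.ne e.1 (congrArg Subtype.val h)

end Multigraph

/-- The vertex of the parallel composition of paths of lengths `k i` lying on the
`i`-th path at distance `j` from the common initial vertex:  `j = 0` gives the common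
initial vertex, `j = k i` the common terminal vertex, and `0 < j < k i` gives the
`j`-th interior vertex of the `i`-th path. -/
def pcVert {ι : Type} (k : ι → ℕ) (i : ι) (j : ℕ) :
    Bool ⊕ ((i : ι) × Fin (k i - 1)) :=
  if h0 : j = 0 then Sum.inl false
  else if h : j < k i then Sum.inr ⟨i, ⟨j - 1, by omega⟩⟩
  else Sum.inl true

/-- The parallel composition of the family of paths `P i` of lengths `k i` (`i : ι`):
the `i`-th path has `k i` edges indexed by `Fin (k i)`, its `j`-th edge joining the
vertices of the `i`-th path at distances `j` and `j + 1` from the common initial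
vertex.  All the initial vertices of the paths are identified to a single vertex and
all the terminal vertices are identified to a single vertex. -/
def parallelComp {ι : Type} (k : ι → ℕ) :
    Multigraph (Bool ⊕ ((i : ι) × Fin (k i - 1))) ((i : ι) × Fin (k i)) where
  fst e := pcVert k e.1 e.2.1
  snd e := pcVert k e.1 (e.2.1 + 1)
  ne := by
    rintro ⟨i, j⟩ h
    have hj := j.2
    simp only [pcVert] at h
    split_ifs at h <;> simp_all <;> omega

/-- The monomial `f i`: the product of the edges of the `i`-th path of the parallel
composition in odd positions (positions `1, 3, 5, ...`, i.e. indices `0, 2, 4, ...`). -/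
noncomputable def oddProd {ι : Type} (K : Type) [Field K] (k : ι → ℕ) (i : ι) :
    MvPolynomial ((i : ι) × Fin (k i)) K :=
  ∏ m : Fin ((k i + 1) / 2), X ⟨i, ⟨2 * m.1, by have := m.2; omega⟩⟩

/-- The monomial `g i`: the product of the edges of the `i`-th path of the parallel
composition in even positions (positions `2, 4, 6, ...`, i.e. indices `1, 3, 5, ...`). -/
noncomputable def evenProd {ι : Type} (K : Type) [Field K] (k : ι → ℕ) (i : ι) :
    MvPolynomial ((i : ι) × Fin (k i)) K :=
  ∏ m : Fin (k i / 2), X ⟨i, ⟨2 * m.1 + 1, by have := m.2; omega⟩⟩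

/-!
Restricting monomials along the parameterization turns them into characters of the torus `(Kˣ)^V`.
By linear independence of characters the Hilbert function at `d` counts the characters of monomials
of degree `d`, and by duality for finite abelian groups `|X|` counts those of Laurent monomials of
degree `d`. Hence `reg G ≤ d` iff every Laurent monomial of degree `d` agrees on the torus with a
monomial of degree `d`.

Let `n = q - 1`. For the upper bound, the exponents along each path may be shifted by
`c, -c, c, …` without affecting the character, provided the shifts of the odd paths, and those of
the even paths, sum to `0` modulo `n`. Averaging over the shifts produces exponents whose least
residues modulo `n` have sum at most `(∑ k i / 2 + 1) (n - 1)`; being congruent to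
`(∑ k i / 2) (n - 1)` modulo `n`, this sum does not exceed it. For the lower bound, the
`∑ k i / 2` interior vertices at odd distance from the initial vertex along their paths have
disjoint stars, and a Laurent monomial whose exponents sum to `-1` at each of them agrees only with
monomials of degree at least `n - 1` in each star.
-/

open scoped Finset

section ShiftedWeights

variable {A : Type*} [Fintype A]

theorem exists_le_of_sum_le_of_injective {f : A → ℕ} (hf : Function.Injective f) [Nonempty A]
    {m : ℕ} (hsum : 2 * ∑ a, f a ≤ Fintype.card A * (2 * m + (Fintype.card A - 1))) :
    ∃ a, f a ≤ m := by
  classical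
  by_contra! hlt
  have hcast : Function.Injective fun a ↦ (f a : ℤ) := Nat.cast_injective.comp hf
  have hdistinct : ∑ i ∈ Finset.range (Fintype.card A), ((m + 1 : ℤ) + i) ≤ ∑ a, (f a : ℤ) := by
    have h := Finset.sum_range_le_sum (s := Finset.univ.image fun a ↦ (f a : ℤ)) (c := m + 1)
      (by simpa using fun a ↦ by exact_mod_cast hlt a)
    rwa [Finset.card_image_of_injective _ hcast, Finset.card_univ,
      Finset.sum_image hcast.injOn] at h
  have hnat : Fintype.card A * (m + 1) + ∑ i ∈ Finset.range (Fintype.card A), i ≤ ∑ a, f a := by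
    zify
    simpa [Finset.sum_add_distrib] using hdistinct
  have hgauss := Finset.sum_range_id_mul_two (Fintype.card A)
  have hpos : 0 < Fintype.card A := Fintype.card_pos
  nlinarith

variable [AddCommGroup A]

theorem exists_add_sub_le {w₀ w₁ : A → ℕ} {B₀ B₁ m : ℕ}
    (h₀ : 2 * ∑ c, w₀ c ≤ Fintype.card A * (2 * B₀ + m))
    (h₁ : 2 * ∑ c, w₁ c ≤ Fintype.card A * (2 * B₁ + m)) (s : A) :
    ∃ u, w₀ u + w₁ (s - u) ≤ B₀ + B₁ + m := by
  have hreindex : ∑ u, w₁ (s - u) = ∑ c, w₁ c := Equiv.sum_comp (Equiv.subLeft s) w₁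
  have hsum : ∑ u, (w₀ u + w₁ (s - u)) ≤ ∑ _u : A, (B₀ + B₁ + m) := by
    rw [Finset.sum_add_distrib, hreindex, Finset.sum_const, Finset.card_univ, smul_eq_mul]
    linarith
  simpa using Finset.exists_le_of_sum_le Finset.univ_nonempty hsum

/-- Choose the optimal shift for all but two members of the family and spend the freedom in the
remaining two on the constraint `∑ c = 0`, where only the average weight can be guaranteed. -/
theorem exists_sum_eq_zero_sum_le {ι : Type*} {S : Finset ι} (hS : #S ≠ 1)
    {w : ι → A → ℕ} {B : ι → ℕ} {m : ℕ} (hmin : ∀ i ∈ S, ∃ c, w i c ≤ B i)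
    (havg : ∀ i ∈ S, 2 * ∑ c, w i c ≤ Fintype.card A * (2 * B i + m)) :
    ∃ c : ι → A, ∑ i ∈ S, c i = 0 ∧ ∑ i ∈ S, w i (c i) ≤ ∑ i ∈ S, B i + m := by
  classical
  rcases S.eq_empty_or_nonempty with rfl | hne
  · exact ⟨0, by simp⟩
  obtain ⟨i₀, i₁, T, h₀₁, h₀, h₁, rfl⟩ :
      ∃ i₀ i₁ T, i₀ ≠ i₁ ∧ i₀ ∉ T ∧ i₁ ∉ T ∧ S = insert i₀ (insert i₁ T) := by
    obtain ⟨i₀, hi₀, i₁, hi₁, hne⟩ :=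
      Finset.one_lt_card.mp (lt_of_le_of_ne hne.card_pos hS.symm)
    exact ⟨i₀, i₁, (S.erase i₀).erase i₁, hne, by simp, by simp, by
      rw [Finset.insert_erase (Finset.mem_erase.mpr ⟨hne.symm, hi₁⟩), Finset.insert_erase hi₀]⟩
  have h₀' : i₀ ∉ insert i₁ T := by simp [h₀₁, h₀]
  choose! c₀ hc₀ using hmin
  obtain ⟨u, hu⟩ := exists_add_sub_le (havg i₀ (by simp)) (havg i₁ (by simp)) (-∑ i ∈ T, c₀ i)
  let c := Function.update (Function.update c₀ i₁ (-∑ i ∈ T, c₀ i - u)) i₀ u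
  have hc_i₀ : c i₀ = u := by simp [c]
  have hc_i₁ : c i₁ = -∑ i ∈ T, c₀ i - u := by simp [c, h₀₁.symm]
  have hc_T : ∀ i ∈ T, c i = c₀ i := fun i hi ↦ by
    simp [c, ne_of_mem_of_not_mem hi h₀, ne_of_mem_of_not_mem hi h₁]
  have hT : ∑ i ∈ T, w i (c i) ≤ ∑ i ∈ T, B i :=
    Finset.sum_le_sum fun i hi ↦ by rw [hc_T i hi]; exact hc₀ i (by simp [hi])
  refine ⟨c, ?_, ?_⟩
  · rw [Finset.sum_insert h₀', Finset.sum_insert h₁, Finset.sum_congr rfl hc_T, hc_i₀, hc_i₁]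
    abel
  · rw [Finset.sum_insert h₀', Finset.sum_insert h₁, Finset.sum_insert h₀', Finset.sum_insert h₁,
      hc_i₀, hc_i₁]
    omega

end ShiftedWeights

section PathWeight

/-- The degree of the reduced monomial supported on a path with `k` edges whose exponents are the
least residues of `a j + (-1) ^ j * c`; as `c` varies, these are the exponent vectors with the same
sums as `a` at all interior vertices of the path. -/
def pathWeight {n k : ℕ} (a : Fin k → ZMod n) (c : ZMod n) : ℕ :=
  ∑ j, (a j + (-1) ^ (j : ℕ) * c).val

variable {n k : ℕ} [NeZero n] (a : Fin k → ZMod n)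

theorem two_mul_sum_zmod_val (n : ℕ) [NeZero n] : 2 * ∑ z : ZMod n, z.val = n * (n - 1) := by
  obtain ⟨m, rfl⟩ := Nat.exists_eq_succ_of_ne_zero (NeZero.ne n)
  rw [← Finset.sum_range_id_mul_two, mul_comm, Finset.sum_range]
  rfl

theorem two_mul_sum_pathWeight : 2 * ∑ c, pathWeight a c = n * (k * (n - 1)) := by
  have hshift (j : Fin k) : ∑ c, (a j + (-1) ^ (j : ℕ) * c).val = ∑ z : ZMod n, z.val := by
    rcases neg_one_pow_eq_or (ZMod n) j with h | h
    · simpa [h] using Equiv.sum_comp (Equiv.addLeft (a j)) ZMod.val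
    · simpa [h, sub_eq_add_neg] using Equiv.sum_comp (Equiv.subLeft (a j)) ZMod.val
  simp only [pathWeight]
  rw [Finset.sum_comm, Finset.sum_congr rfl fun j _ ↦ hshift j, Finset.sum_const, Finset.card_univ,
    Fintype.card_fin, smul_eq_mul, mul_left_comm, two_mul_sum_zmod_val, mul_left_comm]

theorem sum_fin_neg_one_pow (R : Type*) [Ring R] (k : ℕ) :
    ∑ j : Fin k, (-1 : R) ^ (j : ℕ) = if Even k then 0 else 1 := by
  rw [Fin.sum_univ_eq_sum_range fun j ↦ (-1 : R) ^ j, neg_one_geom_sum]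

theorem pathWeight_injective (hk : Odd k) : Function.Injective (pathWeight a) := by
  have hcast (c : ZMod n) : (pathWeight a c : ZMod n) = ∑ j, a j + c := by
    simp [pathWeight, Finset.sum_add_distrib, ← Finset.sum_mul, sum_fin_neg_one_pow,
      Nat.not_even_iff_odd.mpr hk]
  intro c c' h
  simpa [hcast] using congrArg (Nat.cast : ℕ → ZMod n) h

theorem two_mul_sum_pathWeight_eq_div_add_mod :
    2 * ∑ c, pathWeight a c =
      Fintype.card (ZMod n) * (2 * (k / 2 * (n - 1)) + k % 2 * (n - 1)) := by
  rw [two_mul_sum_pathWeight, ZMod.card, ← mul_assoc 2, ← add_mul, Nat.div_add_mod]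

theorem exists_pathWeight_le : ∃ c, pathWeight a c ≤ k / 2 * (n - 1) := by
  have hsum := two_mul_sum_pathWeight_eq_div_add_mod a
  rcases Nat.even_or_odd k with hk | hk
  · rw [Nat.even_iff.mp hk] at hsum
    have : ∑ c, pathWeight a c ≤ ∑ _c : ZMod n, k / 2 * (n - 1) := by
      rw [Finset.sum_const, Finset.card_univ, smul_eq_mul]
      linarith
    simpa using Finset.exists_le_of_sum_le Finset.univ_nonempty this
  · -- The weights are pairwise distinct, so their minimum is at least `(n - 1) / 2` below average.
    rw [Nat.odd_iff.mp hk, one_mul] at hsum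
    exact exists_le_of_sum_le_of_injective (pathWeight_injective a hk) (by
      rw [hsum]; simp [ZMod.card])

theorem exists_sum_eq_zero_sum_pathWeight_le {ι : Type*} {S : Finset ι} (hS : #S ≠ 1) {k : ι → ℕ}
    {p : ℕ} (hp : ∀ i ∈ S, k i % 2 = p) (a : (i : ι) → Fin (k i) → ZMod n) :
    ∃ c : ι → ZMod n, ∑ i ∈ S, c i = 0 ∧
      ∑ i ∈ S, pathWeight (a i) (c i) ≤ (∑ i ∈ S, k i / 2 + p) * (n - 1) := by
  rw [add_mul, Finset.sum_mul]
  exact exists_sum_eq_zero_sum_le hS (fun i _ ↦ exists_pathWeight_le (a i))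
    fun i hi ↦ by rw [← hp i hi, two_mul_sum_pathWeight_eq_div_add_mod]

/-- The two parity classes can be balanced separately; only the odd one costs an extra `n - 1`. -/
theorem exists_sum_odd_eq_zero_sum_even_eq_zero_sum_pathWeight_le {ι : Type*} [Fintype ι]
    {k : ι → ℕ} (hodd : #{i | Odd (k i)} ≠ 1) (heven : #{i | Even (k i)} ≠ 1)
    (a : (i : ι) → Fin (k i) → ZMod n) :
    ∃ c : ι → ZMod n, ∑ i with Odd (k i), c i = 0 ∧ ∑ i with Even (k i), c i = 0 ∧
      ∑ i, pathWeight (a i) (c i) ≤ (∑ i, k i / 2 + 1) * (n - 1) := by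
  obtain ⟨c₁, hc₁, hw₁⟩ := exists_sum_eq_zero_sum_pathWeight_le hodd (p := 1)
    (by simp [Nat.odd_iff]) a
  obtain ⟨c₀, hc₀, hw₀⟩ := exists_sum_eq_zero_sum_pathWeight_le heven (p := 0)
    (by simp [Nat.even_iff]) a
  let c i := if Odd (k i) then c₁ i else c₀ i
  have hc_odd : ∀ i ∈ ({i | Odd (k i)} : Finset ι), c i = c₁ i := fun i hi ↦
    if_pos (by simpa using hi)
  have hc_even : ∀ i ∈ ({i | Even (k i)} : Finset ι), c i = c₀ i := fun i hi ↦
    if_neg (by simpa using hi)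
  have hsplit (f : ι → ℕ) : ∑ i with Odd (k i), f i + ∑ i with Even (k i), f i = ∑ i, f i := by
    simpa using Finset.sum_filter_add_sum_filter_not Finset.univ (fun i ↦ Odd (k i)) f
  refine ⟨c, by rw [Finset.sum_congr rfl hc_odd, hc₁],
    by rw [Finset.sum_congr rfl hc_even, hc₀], ?_⟩
  rw [← hsplit, ← hsplit (fun i ↦ k i / 2),
    Finset.sum_congr rfl fun i hi ↦ congrArg (pathWeight (a i)) (hc_odd i hi),
    Finset.sum_congr rfl fun i hi ↦ congrArg (pathWeight (a i)) (hc_even i hi)]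
  linarith

end PathWeight

theorem prod_zpow_eq_zpow_sum {G ι : Type*} [CommGroup G] (s : Finset ι) (f : ι → ℤ) (g : G) :
    ∏ i ∈ s, g ^ f i = g ^ ∑ i ∈ s, f i :=
  (map_prod (zpowersHom G g) (fun i ↦ Multiplicative.ofAdd (f i)) s).symm

theorem zpow_eq_zpow_of_intCast_eq {G : Type*} [Group G] (g : G) {a b : ℤ}
    (h : (a : ZMod (Nat.card G)) = b) : g ^ a = g ^ b :=
  zpow_eq_zpow_iff_modEq.mpr (((ZMod.intCast_eq_intCast_iff a b _).mp h).of_dvd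
    (Int.natCast_dvd_natCast.mpr (orderOf_dvd_natCard g)))

theorem finrank_map_eq_of_forall_mem {K M N P : Type*} [Ring K] [AddCommGroup M] [Module K M]
    [AddCommGroup N] [Module K N] [AddCommGroup P] [Module K P] {S : Submodule K M}
    {f : M →ₗ[K] N} {g : M →ₗ[K] P} (h : ∀ m ∈ S, f m = 0 ↔ g m = 0) :
    Module.finrank K (S.map f) = Module.finrank K (S.map g) := by
  have hker : (f ∘ₗ S.subtype).ker = (g ∘ₗ S.subtype).ker := by
    ext m
    simpa using h m m.2
  rw [← S.range_subtype, ← LinearMap.range_comp, ← LinearMap.range_comp]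
  exact ((LinearMap.quotKerEquivRange _).symm.trans ((Submodule.quotEquivOfEq _ _ hker).trans
    (LinearMap.quotKerEquivRange _))).finrank_eq

theorem hasEnoughRootsOfUnity_exponent_torus (V K : Type*) [Field K] [Finite K] :
    HasEnoughRootsOfUnity K (Monoid.exponent (V → Kˣ)) := by
  have htop : rootsOfUnity (Nat.card Kˣ) K = ⊤ := by
    ext u
    simp [mem_rootsOfUnity]
  have : HasEnoughRootsOfUnity K (Nat.card Kˣ) := .of_card_le (by rw [htop, Subgroup.card_top])
  exact .of_dvd K (n := Nat.card Kˣ)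
    (Monoid.exponent_dvd_of_forall_pow_eq_one fun x ↦ funext fun v ↦ pow_card_eq_one')

namespace Multigraph

section Characters

variable {V E : Type} (K : Type) [Field K] (G : Multigraph V E)

/-- The character `x ↦ x_v * x_w` of the torus `(Kˣ)^V` attached to an edge `e = {v, w}`. -/
def edgeCharacter (e : E) : (V → Kˣ) →* Kˣ :=
  Pi.evalMonoidHom (fun _ ↦ Kˣ) (G.fst e) * Pi.evalMonoidHom (fun _ ↦ Kˣ) (G.snd e)

theorem edgeCharacter_apply (e : E) (x : V → Kˣ) :
    G.edgeCharacter K e x = x (G.fst e) * x (G.snd e) := rfl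

theorem edgeCharacter_mulSingle [DecidableEq V] (e : E) (v : V) (g : Kˣ) :
    G.edgeCharacter K e (Pi.mulSingle v g) = if G.Incident v e then g else 1 := by
  have hne := G.ne e
  simp only [edgeCharacter_apply, Incident, Pi.mulSingle_apply]
  grind

variable [Fintype E]

/-- The character of the torus `(Kˣ)^V` obtained by restricting the Laurent monomial
`∏ t_e ^ a e` along the parameterization of the toric set. -/
def character (a : E → ℤ) : (V → Kˣ) →* Kˣ :=
  ∏ e, G.edgeCharacter K e ^ a e

theorem character_apply (a : E → ℤ) (x : V → Kˣ) :
    G.character K a x = ∏ e, G.edgeCharacter K e x ^ a e := by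
  simp [character]

theorem character_add (a b : E → ℤ) :
    G.character K (a + b) = G.character K a * G.character K b := by
  ext x
  simp [character_apply, zpow_add, Finset.prod_mul_distrib]

theorem character_neg (a : E → ℤ) : G.character K (-a) = (G.character K a)⁻¹ := by
  ext x
  simp [character_apply]

theorem character_single [DecidableEq E] (e : E) (m : ℤ) :
    G.character K (Pi.single e m) = G.edgeCharacter K e ^ m := by
  ext x
  rw [character_apply, Finset.prod_eq_single e (by simp +contextual) (by simp),
    Pi.single_eq_same, MonoidHom.zpow_apply]

theorem character_mulSingle [DecidableEq V] (a : E → ℤ) (v : V) (g : Kˣ) :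
    G.character K a (Pi.mulSingle v g) = g ^ ∑ e with G.Incident v e, a e := by
  simp_rw [character_apply, edgeCharacter_mulSingle, ite_pow, one_zpow, ← Finset.prod_filter,
    prod_zpow_eq_zpow_sum]

/-- The characters of the Laurent monomials of degree `d` in the edges. -/
def laurentCharacters (d : ℤ) : Set ((V → Kˣ) →* Kˣ) :=
  {χ | ∃ a : E → ℤ, ∑ e, a e = d ∧ G.character K a = χ}

/-- The characters of the monomials of degree `d` in the edges. -/
def monomialCharacters (d : ℕ) : Set ((V → Kˣ) →* Kˣ) :=
  {χ | ∃ b : E → ℕ, ∑ e, b e = d ∧ G.character K (fun e ↦ b e) = χ}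

theorem monomialCharacters_subset_laurentCharacters (d : ℕ) :
    G.monomialCharacters K d ⊆ G.laurentCharacters K d := by
  rintro _ ⟨b, hb, rfl⟩
  exact ⟨_, by exact_mod_cast hb, rfl⟩

/-- The characters of the Laurent monomials of degree zero, i.e. of those Laurent monomials that
are well-defined functions on projective points. -/
def degreeZeroCharacters : Subgroup ((V → Kˣ) →* Kˣ) where
  carrier := G.laurentCharacters K 0
  one_mem' := ⟨0, by simp, by ext; simp [character_apply]⟩
  mul_mem' := by
    rintro _ _ ⟨a, ha, rfl⟩ ⟨b, hb, rfl⟩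
    exact ⟨a + b, by simp [Finset.sum_add_distrib, ha, hb], G.character_add K a b⟩
  inv_mem' := by
    rintro _ ⟨a, ha, rfl⟩
    exact ⟨-a, by simp [ha], G.character_neg K a⟩

theorem ncard_laurentCharacters [Nonempty E] (d : ℤ) :
    (G.laurentCharacters K d).ncard = Nat.card (G.degreeZeroCharacters K) := by
  classical
  obtain ⟨e₀⟩ := ‹Nonempty E›
  have himage : G.laurentCharacters K d =
      (G.character K (Pi.single e₀ d) * ·) '' G.degreeZeroCharacters K := by
    ext χ
    constructor
    · rintro ⟨a, ha, rfl⟩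
      exact ⟨_, ⟨a - Pi.single e₀ d, by simp [ha], rfl⟩,
        by simp only [← character_add, add_sub_cancel]⟩
    · rintro ⟨_, ⟨a, ha, rfl⟩, rfl⟩
      exact ⟨Pi.single e₀ d + a, by simp [Finset.sum_add_distrib, ha],
        by simp only [character_add]⟩
  rw [himage, Set.ncard_image_of_injective _ (mul_right_injective _), ← Nat.card_coe_set_eq]
  rfl

end Characters

section HilbertFunction

variable {V E : Type} (K : Type) [Field K] (G : Multigraph V E)

theorem point_eq_coe_edgeCharacter (x : V → Kˣ) (e : E) :
    G.point K x e = (G.edgeCharacter K e x : K) := rfl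

theorem orbit_point_eq_iff [Fintype E] [Nonempty E] (x y : V → Kˣ) :
    MulAction.orbit Kˣ (G.point K x) = MulAction.orbit Kˣ (G.point K y) ↔
      ∀ χ ∈ G.degreeZeroCharacters K, χ x = χ y := by
  classical
  have hmem : MulAction.orbit Kˣ (G.point K x) = MulAction.orbit Kˣ (G.point K y) ↔
      ∃ u : Kˣ, ∀ e, u * G.edgeCharacter K e y = G.edgeCharacter K e x := by
    simp only [MulAction.orbit_eq_iff, MulAction.mem_orbit_iff, funext_iff, Pi.smul_apply,
      Units.smul_def, smul_eq_mul, point_eq_coe_edgeCharacter, ← Units.val_mul, Units.val_inj]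
  rw [hmem]
  constructor
  · rintro ⟨u, hu⟩ _ ⟨a, ha, rfl⟩
    simp only [character_apply, ← hu, mul_zpow, Finset.prod_mul_distrib, prod_zpow_eq_zpow_sum, ha,
      zpow_zero, one_mul]
  · intro h
    obtain ⟨e₀⟩ := ‹Nonempty E›
    refine ⟨G.edgeCharacter K e₀ x / G.edgeCharacter K e₀ y, fun e ↦ ?_⟩
    have hratio := h _ ⟨Pi.single e 1 + -Pi.single e₀ 1, by simp [Finset.sum_add_distrib], rfl⟩
    simp only [character_add, character_neg, character_single, MonoidHom.mul_apply,
      MonoidHom.inv_apply, MonoidHom.zpow_apply, zpow_one, ← div_eq_mul_inv] at hratio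
    rw [div_eq_div_iff_mul_eq_mul] at hratio
    rw [div_mul_eq_mul_div, div_eq_iff_eq_mul, hratio, mul_comm]

/-- Two vertex assignments give the same projective point exactly when they are congruent modulo the
annihilator of `G.degreeZeroCharacters K`, so this is duality for the finite group `V → Kˣ`. -/
theorem ncard_toricSet [Finite K] [Finite V] [Fintype E] [Nonempty E] :
    (G.toricSet K).ncard = Nat.card (G.degreeZeroCharacters K) := by
  have := hasEnoughRootsOfUnity_exponent_torus V K
  let duality := CommGroup.subgroupOrderIsoSubgroupMonoidHom (V → Kˣ) K
  let H := duality.symm (OrderDual.toDual (G.degreeZeroCharacters K))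
  have hH : (duality H).ofDual = G.degreeZeroCharacters K := by simp [H]
  have horbit (x y : V → Kˣ) : QuotientGroup.leftRel H x y ↔
      MulAction.orbit Kˣ (G.point K x) = MulAction.orbit Kˣ (G.point K y) := by
    simp [QuotientGroup.leftRel_apply, H, duality, orbit_point_eq_iff, inv_mul_eq_one]
  rw [← hH, CommGroup.card_subgroupOrderIsoSubgroupMonoidHom, toricSet, ← Nat.card_coe_set_eq]
  exact Nat.card_congr ((Setoid.quotientKerEquivRange _).symm.trans
    (Quotient.congr (Equiv.refl _) fun x y ↦ (horbit x y).symm))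

/-- Evaluation of a polynomial at all the affine points parameterizing the toric set. -/
noncomputable def evalPoints : MvPolynomial E K →ₗ[K] (V → Kˣ) → K :=
  LinearMap.pi fun x ↦ (aeval (G.point K x)).toLinearMap

theorem evalPoints_apply (f : MvPolynomial E K) (x : V → Kˣ) :
    G.evalPoints K f x = eval (G.point K x) f := by
  simp [evalPoints, aeval_eq_eval]

theorem evalPoints_monomial [Fintype E] (s : E →₀ ℕ) (c : K) :
    G.evalPoints K (monomial s c) = c • fun x ↦ (G.character K (fun e ↦ s e) x : K) := by
  funext x
  simp [evalPoints_apply, eval_monomial, Finsupp.prod_fintype, character_apply,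
    point_eq_coe_edgeCharacter]

theorem mk_vanishingIdeal_eq_zero_iff {d : ℕ} {f : MvPolynomial E K} (hf : f.IsHomogeneous d) :
    Ideal.Quotient.mk (G.vanishingIdeal K) f = 0 ↔ G.evalPoints K f = 0 := by
  have hcomp (m : ℕ) : homogeneousComponent m f = if m = d then f else 0 :=
    homogeneousComponent_of_mem hf
  have hmem : f ∈ G.vanishingIdeal K ↔
      ∀ (x : V → Kˣ) (m : ℕ), eval (G.point K x) (homogeneousComponent m f) = 0 := Iff.rfl
  simp only [Ideal.Quotient.eq_zero_iff_mem, hmem, hcomp, funext_iff, evalPoints_apply,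
    Pi.zero_apply, apply_ite (eval _), map_zero, ite_eq_right_iff, forall_eq]

theorem map_evalPoints_homogeneousSubmodule [Fintype E] (d : ℕ) :
    (homogeneousSubmodule E K d).map (G.evalPoints K) =
      Submodule.span K (Set.range fun (χ : G.monomialCharacters K d) x ↦ (χ.1 x : K)) := by
  apply le_antisymm
  · rintro _ ⟨f, hf, rfl⟩
    rw [f.as_sum, map_sum]
    refine Submodule.sum_mem _ fun s hs ↦ ?_
    have hdeg : ∑ e, s e = d := by
      rw [← Finsupp.degree_eq_sum, Finsupp.degree_eq_weight_one]
      exact hf (mem_support_iff.mp hs)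
    rw [evalPoints_monomial]
    exact Submodule.smul_mem _ _ (Submodule.subset_span ⟨⟨_, s, hdeg, rfl⟩, rfl⟩)
  · rw [Submodule.span_le]
    rintro _ ⟨⟨_, b, hb, rfl⟩, rfl⟩
    refine ⟨monomial (Finsupp.equivFunOnFinite.symm b) 1, isHomogeneous_monomial _ ?_, ?_⟩
    · simpa [Finsupp.degree_eq_sum] using hb
    · simp [evalPoints_monomial]

theorem hilbert_eq_ncard_monomialCharacters [Finite K] [Finite V] [Fintype E] (d : ℕ) :
    G.hilbert K d = (G.monomialCharacters K d).ncard := by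
  have hindep : LinearIndependent K fun (χ : G.monomialCharacters K d) x ↦ (χ.1 x : K) := by
    refine (linearIndependent_monoidHom (V → Kˣ) K).comp
      (fun χ : G.monomialCharacters K d ↦ (Units.coeHom K).comp χ.1) fun χ ψ h ↦ ?_
    exact Subtype.ext (MonoidHom.ext fun x ↦ Units.ext (DFunLike.congr_fun h x))
  have := Fintype.ofFinite (G.monomialCharacters K d)
  rw [hilbert, finrank_map_eq_of_forall_mem (g := G.evalPoints K)
    fun f hf ↦ G.mk_vanishingIdeal_eq_zero_iff K hf, map_evalPoints_homogeneousSubmodule,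
    finrank_span_eq_card hindep, ← Nat.card_eq_fintype_card, Nat.card_coe_set_eq]

theorem hilbert_eq_ncard_toricSet_iff [Finite K] [Finite V] [Fintype E] [Nonempty E] {d : ℕ} :
    G.hilbert K d = (G.toricSet K).ncard ↔
      G.laurentCharacters K d ⊆ G.monomialCharacters K d := by
  rw [hilbert_eq_ncard_monomialCharacters, ncard_toricSet, ← ncard_laurentCharacters K G d]
  have hsub := G.monomialCharacters_subset_laurentCharacters K d
  exact ⟨fun h ↦ (Set.eq_of_subset_of_ncard_le hsub h.ge).ge, fun h ↦ by rw [hsub.antisymm h]⟩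

end HilbertFunction

section Regularity

variable {V E : Type} (K : Type) [Field K] (G : Multigraph V E) [Fintype E]

theorem character_eq_of_intCast_eq {a b : E → ℤ}
    (h : ∀ e, (a e : ZMod (Nat.card Kˣ)) = b e) : G.character K a = G.character K b := by
  ext x
  simp only [character_apply, zpow_eq_zpow_of_intCast_eq _ (h _)]

theorem laurentCharacters_subset_monomialCharacters_of_le [Nonempty E] {d d' : ℕ} (hd : d ≤ d')
    (h : G.laurentCharacters K d ⊆ G.monomialCharacters K d) :
    G.laurentCharacters K d' ⊆ G.monomialCharacters K d' := by
  classical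
  obtain ⟨e₀⟩ := ‹Nonempty E›
  obtain ⟨m, rfl⟩ := Nat.exists_eq_add_of_le hd
  rintro _ ⟨a, ha, rfl⟩
  obtain ⟨b, hb, hχ⟩ := h ⟨a - Pi.single e₀ (m : ℤ), by simp [ha], rfl⟩
  let b' : E → ℕ := b + Pi.single e₀ m
  have hb' : (fun e ↦ (b' e : ℤ)) = (fun e ↦ (b e : ℤ)) + Pi.single e₀ (m : ℤ) := by
    ext e
    obtain rfl | he := eq_or_ne e e₀ <;> simp [b', *]
  refine ⟨b', by simp [b', Finset.sum_add_distrib, hb], ?_⟩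
  rw [hb', character_add, hχ, ← character_add, sub_add_cancel]

theorem sum_incident_eq_of_character_eq [Finite K] [DecidableEq V] {a b : E → ℤ}
    (h : G.character K a = G.character K b) (v : V) :
    ((∑ e with G.Incident v e, a e : ℤ) : ZMod (Nat.card Kˣ)) =
      (∑ e with G.Incident v e, b e : ℤ) := by
  obtain ⟨g, hg⟩ := IsCyclic.exists_ofOrder_eq_natCard (α := Kˣ)
  rw [ZMod.intCast_eq_intCast_iff, ← hg, ← zpow_eq_zpow_iff_modEq, ← character_mulSingle,
    ← character_mulSingle, h]

variable [Finite K] [Nonempty E]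

theorem character_mem_monomialCharacters {a : E → ℤ} {d : ℕ}
    (hdeg : ((∑ e, a e : ℤ) : ZMod (Nat.card Kˣ)) = d)
    (hval : ∑ e, (a e : ZMod (Nat.card Kˣ)).val < d + Nat.card Kˣ) :
    G.character K a ∈ G.monomialCharacters K d := by
  classical
  obtain ⟨e₀⟩ := ‹Nonempty E›
  set n := Nat.card Kˣ
  set w := ∑ e, (a e : ZMod n).val with hw
  have hmod : w ≡ d [MOD n] := by
    rw [← ZMod.natCast_eq_natCast_iff, ← hdeg, hw]
    simp
  obtain ⟨m, hm⟩ : ∃ m, d = w + n * m := by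
    have hle : w ≤ d := by
      by_contra! hlt
      have := Nat.le_of_dvd (by omega) ((Nat.modEq_iff_dvd' hlt.le).mp hmod.symm)
      omega
    obtain ⟨m, hm⟩ := (Nat.modEq_iff_dvd' hle).mp hmod
    exact ⟨m, by omega⟩
  refine ⟨(fun e ↦ (a e : ZMod n).val) + Pi.single e₀ (n * m), ?_, ?_⟩
  · simp [Finset.sum_add_distrib, ← hw, hm]
  · refine G.character_eq_of_intCast_eq K fun e ↦ ?_
    obtain rfl | he := eq_or_ne e e₀ <;> simp [n, *]

theorem exists_laurentCharacters_subset_monomialCharacters :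
    ∃ d : ℕ, G.laurentCharacters K d ⊆ G.monomialCharacters K d := by
  refine ⟨Fintype.card E * Nat.card Kˣ, ?_⟩
  rintro _ ⟨a, ha, rfl⟩
  refine G.character_mem_monomialCharacters K (by rw [ha, Int.cast_natCast])
    (lt_add_of_le_of_pos ?_ Nat.card_pos)
  have : NeZero (Nat.card Kˣ) := ⟨Nat.card_pos.ne'⟩
  exact Finset.sum_le_card_nsmul _ _ _ fun e _ ↦ (ZMod.val_lt (a e : ZMod (Nat.card Kˣ))).le

theorem reg_le_iff [Finite V] {d : ℕ} :
    G.reg K ≤ d ↔ G.laurentCharacters K d ⊆ G.monomialCharacters K d := by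
  have hreg : G.reg K = sInf {d : ℕ | G.laurentCharacters K d ⊆ G.monomialCharacters K d} := by
    simp only [reg, hilbert_eq_ncard_toricSet_iff]
  rw [hreg]
  exact ⟨fun h ↦ G.laurentCharacters_subset_monomialCharacters_of_le K h
    (Nat.sInf_mem (G.exists_laurentCharacters_subset_monomialCharacters K)), fun h ↦ Nat.sInf_le h⟩

end Regularity

section IndependentVertices

variable {V E : Type} (G : Multigraph V E) {σ : Type*}

/-- A family of vertices of which no two members share an edge, so that their stars are pairwise
disjoint. -/
def IsIndependent (w : σ → V) : Prop :=
  ∀ ⦃s t e⦄, G.Incident (w s) e → G.Incident (w t) e → s = t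

variable {G} [Fintype σ]

theorem IsIndependent.sum_sum_incident_le [Fintype E] [DecidableEq V] {w : σ → V}
    (hw : G.IsIndependent w) (b : E → ℕ) : ∑ s, ∑ e with G.Incident (w s) e, b e ≤ ∑ e, b e := by
  classical
  have hdisj : ((Finset.univ : Finset σ) : Set σ).PairwiseDisjoint
      fun s ↦ ({e | G.Incident (w s) e} : Finset E) := fun s _ t _ hst ↦
    Finset.disjoint_filter.mpr fun _ _ hs ht ↦ hst (hw hs ht)
  rw [← Finset.sum_biUnion hdisj]
  exact Finset.sum_le_sum_of_subset (Finset.subset_univ _)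

theorem IsIndependent.card_mul_le_reg (K : Type) [Field K] [Finite K] [Finite V] [Finite E]
    {w : σ → V} (hw : G.IsIndependent w) (hdeg : ∀ s, ∃ e, G.Incident (w s) e)
    (havoid : ∃ e, ∀ s, ¬G.Incident (w s) e) :
    Fintype.card σ * (Nat.card Kˣ - 1) ≤ G.reg K := by
  classical
  have := Fintype.ofFinite E
  choose ε hε using hdeg
  obtain ⟨e₀, he₀⟩ := havoid
  have : Nonempty E := ⟨e₀⟩
  set d := G.reg K
  let a : E → ℤ := Pi.single e₀ (d + Fintype.card σ : ℤ) - ∑ s, Pi.single (ε s) 1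
  have ha_deg : ∑ e, a e = d := by
    simp [a, Finset.sum_comm (s := (Finset.univ : Finset E))]
  have hε_iff (s t : σ) : G.Incident (w s) (ε t) ↔ t = s :=
    ⟨fun h ↦ hw (hε t) h, fun h ↦ h ▸ hε t⟩
  have ha_star (s : σ) : ∑ e with G.Incident (w s) e, a e = -1 := by
    simp [a, Finset.sum_comm (t := (Finset.univ : Finset σ)), he₀, hε_iff]
  obtain ⟨b, hb_deg, hb⟩ := (G.reg_le_iff K).mp (le_refl d) ⟨a, ha_deg, rfl⟩
  have hb_star (s : σ) : Nat.card Kˣ - 1 ≤ ∑ e with G.Incident (w s) e, b e := by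
    have hcast := G.sum_incident_eq_of_character_eq K hb (w s)
    rw [ha_star, Int.cast_neg, Int.cast_one, eq_neg_iff_add_eq_zero] at hcast
    have hdvd : Nat.card Kˣ ∣ ∑ e with G.Incident (w s) e, b e + 1 := by
      rw [← ZMod.natCast_eq_zero_iff]
      exact_mod_cast hcast
    exact Nat.sub_le_of_le_add (Nat.le_of_dvd (Nat.succ_pos _) hdvd)
  calc Fintype.card σ * (Nat.card Kˣ - 1)
      ≤ ∑ s, ∑ e with G.Incident (w s) e, b e := by
        simpa using Finset.card_nsmul_le_sum Finset.univ _ _ fun s _ ↦ hb_star s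
    _ ≤ ∑ e, b e := hw.sum_sum_incident_le b
    _ = d := hb_deg

end IndependentVertices

end Multigraph

section ParallelComposition

variable {ι : Type} {k : ι → ℕ}

theorem pcVert_interior_eq_iff {i i' : ι} {j j' : ℕ} (h₀ : 0 < j) (h₁ : j < k i) :
    pcVert k i' j' = pcVert k i j ↔ i' = i ∧ j' = j := by
  constructor
  · intro h
    simp only [pcVert] at h
    grind
  · rintro ⟨rfl, rfl⟩
    rfl

theorem incident_pcVert_iff {i : ι} {j : ℕ} (h₀ : 0 < j) (h₁ : j < k i)
    (e : (i : ι) × Fin (k i)) :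
    (parallelComp k).Incident (pcVert k i j) e ↔
      e.1 = i ∧ ((e.2 : ℕ) = j ∨ (e.2 : ℕ) + 1 = j) := by
  simp only [Multigraph.Incident, parallelComp, pcVert_interior_eq_iff h₀ h₁, and_or_left]

variable (k) in
/-- The vertices of the parallel composition at distances `1, 3, 5, …` from the common initial
vertex, other than the common terminal vertex. -/
def oddVert (s : (i : ι) × Fin (k i / 2)) : Bool ⊕ ((i : ι) × Fin (k i - 1)) :=
  pcVert k s.1 (2 * s.2 + 1)

theorem incident_oddVert_iff (s : (i : ι) × Fin (k i / 2)) (e : (i : ι) × Fin (k i)) :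
    (parallelComp k).Incident (oddVert k s) e ↔ e.1 = s.1 ∧ (e.2 : ℕ) / 2 = s.2 := by
  rw [oddVert, incident_pcVert_iff (by omega) (by omega)]
  exact and_congr_right fun _ ↦ by omega

theorem isIndependent_oddVert : (parallelComp k).IsIndependent (oddVert k) := by
  rintro ⟨i, m⟩ ⟨i', m'⟩ e hs ht
  rw [incident_oddVert_iff] at hs ht
  obtain rfl : i = i' := hs.1.symm.trans ht.1
  obtain rfl : m = m' := Fin.ext (hs.2.symm.trans ht.2)
  rfl

theorem prod_range_mul_succ_zpow_neg_one_pow {A : Type*} [CommGroup A] (y : ℕ → A) (k : ℕ) :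
    ∏ j ∈ Finset.range k, (y j * y (j + 1)) ^ ((-1 : ℤ) ^ j) = y 0 / y k ^ ((-1 : ℤ) ^ k) := by
  induction k with
  | zero => simp
  | succ k ih =>
    rw [Finset.prod_range_succ, ih, mul_zpow, pow_succ, mul_neg_one, zpow_neg, div_inv_eq_mul,
      ← mul_assoc, div_mul_cancel]

/-- The exponent vector with entries `c i, -c i, c i, …` along the `i`-th path; adding it to another
one does not change the exponent sums at the interior vertices of the paths. -/
def alternating (k : ι → ℕ) (c : ι → ℤ) (e : (i : ι) × Fin (k i)) : ℤ :=
  (-1) ^ (e.2 : ℕ) * c e.1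

variable [Fintype ι] (K : Type) [Field K]

theorem sum_alternating (c : ι → ℤ) : ∑ e, alternating k c e = ∑ i with Odd (k i), c i := by
  simp [alternating, Fintype.sum_sigma, ← Finset.sum_mul, sum_fin_neg_one_pow, Finset.sum_filter,
    ← Nat.not_even_iff_odd]

theorem character_alternating_apply (hk : ∀ i, 0 < k i) (c : ι → ℤ)
    (x : Bool ⊕ ((i : ι) × Fin (k i - 1)) → Kˣ) :
    (parallelComp k).character K (alternating k c) x =
      (x (.inl false) * x (.inl true)) ^ (∑ i with Odd (k i), c i) *
        (x (.inl false) / x (.inl true)) ^ (∑ i with Even (k i), c i) := by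
  have hpath (i : ι) :
      ∏ j : Fin (k i), (parallelComp k).edgeCharacter K ⟨i, j⟩ x ^ alternating k c ⟨i, j⟩ =
        if Odd (k i) then (x (.inl false) * x (.inl true)) ^ c i
        else (x (.inl false) / x (.inl true)) ^ c i := by
    have htele := prod_range_mul_succ_zpow_neg_one_pow (fun j ↦ x (pcVert k i j)) (k i)
    have hlast : pcVert k i (k i) = .inl true := by simp [pcVert, (hk i).ne']
    rw [Finset.prod_range, hlast] at htele
    simp only [alternating, zpow_mul, Finset.prod_zpow, Multigraph.edgeCharacter_apply,
      parallelComp]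
    rw [htele]
    split_ifs with h
    · simp [h.neg_one_pow, pcVert]
    · simp [(Nat.not_odd_iff_even.mp h).neg_one_pow, pcVert]
  simp only [Multigraph.character_apply, Fintype.prod_sigma, hpath, Finset.prod_ite,
    prod_zpow_eq_zpow_sum, Nat.not_odd_iff_even]

theorem character_alternating_eq_one (hk : ∀ i, 0 < k i) {c : ι → ℤ}
    (hodd : ∑ i with Odd (k i), (c i : ZMod (Nat.card Kˣ)) = 0)
    (heven : ∑ i with Even (k i), (c i : ZMod (Nat.card Kˣ)) = 0) :
    (parallelComp k).character K (alternating k c) = 1 := by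
  ext x : 1
  rw [← Int.cast_sum, ← Int.cast_zero] at hodd heven
  rw [character_alternating_apply K hk, zpow_eq_zpow_of_intCast_eq _ hodd,
    zpow_eq_zpow_of_intCast_eq _ heven, zpow_zero, zpow_zero, mul_one, MonoidHom.one_apply]

theorem reg_parallelComp_le [Finite K] [Nonempty ι] (hk : ∀ i, 0 < k i)
    (hodd : #{i | Odd (k i)} ≠ 1) (heven : #{i | Even (k i)} ≠ 1) :
    (parallelComp k).reg K ≤ (∑ i, k i / 2) * (Nat.card Kˣ - 1) := by
  have hn : 0 < Nat.card Kˣ := Nat.card_pos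
  have : NeZero (Nat.card Kˣ) := ⟨hn.ne'⟩
  have : Nonempty ((i : ι) × Fin (k i)) := ‹Nonempty ι›.map fun i ↦ ⟨i, 0, hk i⟩
  rw [Multigraph.reg_le_iff]
  rintro _ ⟨a, ha, rfl⟩
  obtain ⟨c, hc_odd, hc_even, hweight⟩ :=
    exists_sum_odd_eq_zero_sum_even_eq_zero_sum_pathWeight_le hodd heven
      (n := Nat.card Kˣ) fun i j ↦ a ⟨i, j⟩
  obtain ⟨c, rfl⟩ : ∃ c' : ι → ℤ, (fun i ↦ (c' i : ZMod (Nat.card Kˣ))) = c :=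
    ZMod.intCast_surjective.comp_left c
  have hshift : (parallelComp k).character K a =
      (parallelComp k).character K (a + alternating k c) := by
    ext x : 1
    rw [Multigraph.character_add, character_alternating_eq_one K hk hc_odd hc_even,
      MonoidHom.mul_apply, MonoidHom.one_apply, mul_one]
  rw [hshift]
  apply Multigraph.character_mem_monomialCharacters
  · simp only [Pi.add_apply, Finset.sum_add_distrib, sum_alternating, ha, Int.cast_add,
      Int.cast_sum, Int.cast_natCast, hc_odd, add_zero]
  · have hval : ∑ e, (((a + alternating k c) e : ℤ) : ZMod (Nat.card Kˣ)).val =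
        ∑ i, pathWeight (fun j ↦ (a ⟨i, j⟩ : ZMod (Nat.card Kˣ))) (c i) := by
      simp [Fintype.sum_sigma, pathWeight, alternating]
    rw [hval]
    linarith [Nat.sub_lt hn one_pos]

theorem le_reg_parallelComp [Finite K] (hodd : ∃ i, Odd (k i)) :
    (∑ i, k i / 2) * (Nat.card Kˣ - 1) ≤ (parallelComp k).reg K := by
  have hcard : Fintype.card ((i : ι) × Fin (k i / 2)) = ∑ i, k i / 2 := by simp
  rw [← hcard]
  refine isIndependent_oddVert.card_mul_le_reg K (fun s ↦ ?_) ?_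
  · exact ⟨⟨s.1, 2 * s.2, by omega⟩, by simp [incident_oddVert_iff]⟩
  · obtain ⟨i, m, hm⟩ := hodd
    refine ⟨⟨i, 2 * m, by omega⟩, fun ⟨i', s⟩ ↦ ?_⟩
    rw [incident_oddVert_iff]
    rintro ⟨rfl, hs⟩
    dsimp only at hs
    omega

theorem reg_parallelComp_many_odd_many_even_general [Finite K] (hk : ∀ i, 0 < k i)
    (hodd : 1 < #{i | Odd (k i)}) (heven : #{i | Even (k i)} ≠ 1) :
    (parallelComp k).reg K = (∑ i, k i / 2) * (Nat.card K - 2) := by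
  obtain ⟨i, hi⟩ := Finset.card_pos.mp (zero_lt_one.trans hodd)
  have : Nonempty ι := ⟨i⟩
  rw [show Nat.card K - 2 = Nat.card Kˣ - 1 by rw [Nat.card_units, Nat.sub_sub]]
  exact (reg_parallelComp_le K hk hodd.ne' heven).antisymm
    (le_reg_parallelComp K ⟨i, by simpa using hi⟩)

end ParallelComposition

/-- **Table 2, case `l > 1, r > l + 1`.**  Let `G` be the parallel composition of `r`
paths, the first `l ≥ 2` of odd lengths and the remaining `r - l ≥ 2` of even lengths.
Then `reg G = (⌊k 0/2⌋ + ... + ⌊k (l-1)/2⌋ + k l/2 + ... + k (r-1)/2)(q-2)`,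
where `q = |K|`. -/
theorem reg_parallelComp_many_odd_many_even
    (K : Type) [Field K] [Fintype K] (r l : ℕ) (hl : 2 ≤ l) (hrl : l + 2 ≤ r)
    (k : Fin r → ℕ) (hk : ∀ i, 0 < k i)
    (ho : ∀ i : Fin r, i.1 < l → Odd (k i)) (he : ∀ i : Fin r, l ≤ i.1 → Even (k i)) :
    (parallelComp k).reg K = (∑ i, k i / 2) * (Fintype.card K - 2) := by
  have hodd : 1 < #{i | Odd (k i)} := Finset.one_lt_card.mpr
    ⟨⟨0, by omega⟩, by simpa using ho _ (zero_lt_two.trans_le hl),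
      ⟨1, by omega⟩, by simpa using ho _ (one_lt_two.trans_le hl), by simp⟩
  have heven : 1 < #{i | Even (k i)} := Finset.one_lt_card.mpr
    ⟨⟨l, by omega⟩, by simp [he], ⟨l + 1, by omega⟩, by simp [he], by simp⟩
  rw [← Nat.card_eq_fintype_card]
  exact reg_parallelComp_many_odd_many_even_general K hk hodd heven.ne'
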